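/- (Corollary: robustness bound comparison between Shapley and LOO.) Let τ_0, …, τ_{n−1} be real numbers that are either all nonnegative or all nonpositive, satisfy the diminishing-influence condition |τ_0| ≥ |τ_1| ≥ … ≥ |τ_{n−1}| with τ_{n−1} ≠ 0, and let δ_0, …, δ_{n−1} be nonnegative real numbers with n^{-1} Σ_{k=0}^{n-1} δ_k ≤ δ_{n−1}. Then (n^{-1} Σ_{k=0}^{n-1} δ_k) / (n^{-1} Σ_{k=0}^{n-1} τ_k)² ≤ δ_{n−1} / τ_{n−1}², i.e., the Chebyshev upper bound on the β-robustness of the Shapley value is no larger than that of LOO. -/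

import Mathlib

/-- Corollary: robustness bound comparison between Shapley and LOO. If the expected marginal
contributions `τ_0, …, τ_n` are all nonnegative or all nonpositive, have decreasing absolute
values with `τ_n ≠ 0`, and the nonnegative variances `δ_0, …, δ_n` have average at most `δ_n`,
then the Chebyshev bound for the Shapley value is no larger than that for LOO. -/
theorem shapley_bound_le_loo_bound
    (n : ℕ) (τ δ : Fin (n + 1) → ℝ)
    (hsign : (∀ k, 0 ≤ τ k) ∨ (∀ k, τ k ≤ 0))
    (hmono : ∀ i j : Fin (n + 1), i ≤ j → |τ j| ≤ |τ i|)
    (hlast : τ (Fin.last n) ≠ 0)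
    (hδ : ∀ k, 0 ≤ δ k)
    (havg : ((n + 1 : ℕ) : ℝ)⁻¹ * ∑ k, δ k ≤ δ (Fin.last n)) :
    (((n + 1 : ℕ) : ℝ)⁻¹ * ∑ k, δ k) / (((n + 1 : ℕ) : ℝ)⁻¹ * ∑ k, τ k) ^ 2
      ≤ δ (Fin.last n) / (τ (Fin.last n)) ^ 2 := by
  have habs : |∑ k, τ k| = ∑ k, |τ k| := by
    rcases hsign with h | h
    · rw [abs_of_nonneg (Finset.sum_nonneg fun k _ => h k)]
      exact Finset.sum_congr rfl fun k _ => (abs_of_nonneg (h k)).symm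
    · rw [abs_of_nonpos (Finset.sum_nonpos fun k _ => h k), ← Finset.sum_neg_distrib]
      exact Finset.sum_congr rfl fun k _ => (abs_of_nonpos (h k)).symm
  have hpos : (0 : ℝ) < ((n + 1 : ℕ) : ℝ) := by positivity
  have hsum : ((n + 1 : ℕ) : ℝ) * |τ (Fin.last n)| ≤ ∑ k, |τ k| := by
    have h := Finset.card_nsmul_le_sum (Finset.univ : Finset (Fin (n + 1)))
      (fun k => |τ k|) |τ (Fin.last n)| (fun k _ => hmono k _ (Fin.le_last k))
    simpa [nsmul_eq_mul] using h
  have hle : |τ (Fin.last n)| ≤ |((n + 1 : ℕ) : ℝ)⁻¹ * ∑ k, τ k| := by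
    rw [abs_mul, abs_of_pos (inv_pos.mpr hpos), habs, le_inv_mul_iff₀ hpos]
    exact hsum
  exact div_le_div₀ (hδ _) havg (by positivity) (sq_le_sq.mpr hle)
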